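/- Assume q is not a root of unity (t½ arbitrary nonzero). A nonzero eigenvector E ∈ V of the operator Y belongs to Rad if and only if ev(E) = 0, i.e., if and only if E(t⁻½) = 0. -/

import Mathlib

noncomputable section

/-- `V = ℂ[X, X⁻¹]`, the space of complex Laurent polynomials. -/
abbrev V : Type := LaurentPolynomial ℂ

/-- The monomial `X ^ m`. -/
def Xm (m : ℤ) : V := LaurentPolynomial.T m

/-- The radical of the duality pairing. -/
def Rad (pair : V →ₗ[ℂ] V →ₗ[ℂ] ℂ) : Submodule ℂ V := LinearMap.ker pair

theorem V_induct {P : V → Prop} (hadd : ∀ f g, P f → P g → P (f + g))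
    (hsmul : ∀ (c : ℂ) f, P f → P (c • f)) (h : ∀ m : ℤ, P (Xm m)) : ∀ f, P f := by
  intro f
  induction f using LaurentPolynomial.induction_on' with
  | add p q hp hq => exact hadd p q hp hq
  | C_mul_T n a =>
    have := hsmul a _ (h n)
    rwa [LaurentPolynomial.smul_eq_C_mul] at this

theorem Xm_add (a b : ℤ) : Xm (a + b) = Xm a * Xm b := LaurentPolynomial.T_add a b

theorem Xm_zero : Xm 0 = 1 := LaurentPolynomial.T_zero

theorem V_induct_X {P : V → Prop} (hadd : ∀ f g, P f → P g → P (f + g))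
    (hsmul : ∀ (c : ℂ) f, P f → P (c • f)) (h1 : P 1)
    (hX : ∀ f, P (Xm 1 * f) ↔ P f) : ∀ f, P f := by
  apply V_induct hadd hsmul
  intro m
  induction m using Int.induction_on with
  | zero => rwa [Xm_zero]
  | succ n ih => rw [add_comm, Xm_add]; exact (hX _).2 ih
  | pred n ih =>
    apply (hX _).1
    rw [← Xm_add]
    convert ih using 2
    ring

/-- if `q` is not a root of unity, a nonzero `Y`-eigenvector
`E ∈ V` belongs to `Rad` if and only if `ev(E) = E(t⁻½) = 0`. -/
theorem stmt10
    (q2 t2 : ℂ) (hq2 : q2 ≠ 0) (ht2 : t2 ≠ 0)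
    (S Top Pi Y : V →ₗ[ℂ] V)
    (hS : ∀ m : ℤ, S (Xm m) = Xm (-m))
    (hPi : ∀ m : ℤ, Pi (Xm m) = q2 ^ m • Xm (-m))
    (hT : ∀ f : V, (Xm 2 - 1) * Top f
        = t2 • ((Xm 2 - 1) * S f) + (t2 - t2⁻¹) • (S f - f))
    (hY : Y = Pi ∘ₗ Top)
    (ev : V →ₗ[ℂ] ℂ) (hev : ∀ m : ℤ, ev (Xm m) = t2 ^ (-m))
    (Yz : ℤ → V →ₗ[ℂ] V)
    (hYz0 : Yz 0 = LinearMap.id) (hYz1 : Yz 1 = Y)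
    (hYzadd : ∀ a b : ℤ, Yz (a + b) = Yz a ∘ₗ Yz b)
    (pair : V →ₗ[ℂ] V →ₗ[ℂ] ℂ)
    (hpair : ∀ (m : ℤ) (g : V), pair (Xm m) g = ev (Yz (-m) g))
    (hqnr : ∀ n : ℕ, 0 < n → (q2 ^ 2) ^ n ≠ 1) :
    ∀ E : V, E ≠ 0 → (∃ c : ℂ, Y E = c • E) →
      (E ∈ Rad pair ↔ ev E = 0) := by
  set h : ℂ := t2 - t2⁻¹ with hh
  have XX : Xm 1 * Xm (-1) = 1 := by rw [← Xm_add]; exact Xm_zero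
  have XXf : ∀ f : V, Xm 1 * (Xm (-1) * f) = f := fun f => by rw [← mul_assoc, XX, one_mul]
  have XXf' : ∀ f : V, Xm (-1) * (Xm 1 * f) = f := fun f => by
    rw [← mul_assoc, mul_comm (Xm (-1)), XX, one_mul]
  have X2 : Xm 2 = Xm 1 * Xm 1 := by rw [← Xm_add]; rfl
  have dne : (Xm 2 - 1 : V) ≠ 0 := by
    intro h0
    have h1 : (LaurentPolynomial.T 2 : V) = LaurentPolynomial.T 0 := by
      rw [LaurentPolynomial.T_zero]; exact sub_eq_zero.1 h0
    have h2 := congrArg LaurentPolynomial.degree h1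
    rw [LaurentPolynomial.degree_T, LaurentPolynomial.degree_T] at h2
    exact absurd (WithBot.coe_injective h2) (by decide)
  have SX : ∀ f, S (Xm 1 * f) = Xm (-1) * S f := by
    apply V_induct
    · intro f g hf hg; simp only [mul_add, map_add, hf, hg]
    · intro c f hf; simp only [mul_smul_comm, map_smul, hf]
    · intro m; rw [← Xm_add, hS, hS, ← Xm_add]; congr 1; ring
  have PX : ∀ f, Pi (Xm 1 * f) = q2 • (Xm (-1) * Pi f) := by
    apply V_induct
    · intro f g hf hg; simp only [mul_add, map_add, hf, hg, smul_add]
    · intro c f hf; simp only [mul_smul_comm, map_smul, hf]; rw [smul_comm]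
    · intro m
      rw [← Xm_add, hPi, hPi, mul_smul_comm, ← Xm_add, smul_smul, zpow_add₀ hq2, zpow_one]
      congr 2; ring
  have PP : ∀ f, Pi (Pi f) = f := by
    apply V_induct
    · intro f g hf hg; simp only [map_add, hf, hg]
    · intro c f hf; simp only [map_smul, hf]
    · intro m
      rw [hPi, map_smul, hPi, smul_smul, ← zpow_add₀ hq2]; simp
  have evX : ∀ f, ev (Xm 1 * f) = t2⁻¹ * ev f := by
    apply V_induct
    · intro f g hf hg; simp only [mul_add, map_add, hf, hg]
    · intro c f hf; simp only [mul_smul_comm, map_smul, hf, smul_eq_mul]; ring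
    · intro m
      rw [← Xm_add, hev, hev, neg_add, zpow_add₀ ht2, zpow_neg_one]
  have evX' : ∀ f, ev (Xm (-1) * f) = t2 * ev f := by
    intro f
    have := evX (Xm (-1) * f)
    rw [XXf] at this
    rw [this]; field_simp
  have TX : ∀ g, Top (Xm 1 * g) = Xm (-1) * (Top g - h • g) := by
    intro g
    apply mul_left_cancel₀ dne
    have e1 := hT (Xm 1 * g)
    have e2 := hT g
    rw [SX] at e1
    simp only [LaurentPolynomial.smul_eq_C_mul] at e1 e2 ⊢
    rw [X2] at e1 e2 ⊢
    linear_combination e1 - Xm (-1) * e2 + LaurentPolynomial.C h * Xm 1 * g * XX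
  have TX' : ∀ g, Top (Xm (-1) * g) = Xm 1 * Top g + h • (Xm (-1) * g) := by
    intro g
    have := TX (Xm (-1) * g)
    rw [XXf] at this
    rw [this, XXf]; abel
  have T1 : Top 1 = t2 • (1 : V) := by
    apply mul_left_cancel₀ dne
    have e := hT 1
    have : S 1 = 1 := by rw [← Xm_zero, hS]; rfl
    rw [this] at e
    rw [e]; simp
  have hq : t2 * t2 = h * t2 + 1 := by rw [hh]; field_simp; ring
  have TT : ∀ f, Top (Top f) = h • Top f + f := by
    apply V_induct_X
    · intro f g hf hg; simp only [map_add, hf, hg, smul_add]; abel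
    · intro c f hf; simp only [map_smul, hf, smul_add]; rw [smul_comm]
    · rw [T1, map_smul, T1, smul_smul, smul_smul, hq, add_smul, one_smul]
    · intro f
      rw [TX, TX', map_sub, map_smul, mul_sub, mul_sub, smul_sub]
      constructor
      · intro e
        have : Xm 1 * Top (Top f) = Xm 1 * (h • Top f + f) := by
          rw [mul_add]
          linear_combination (exp := 1) e
        have := congrArg (fun z => Xm (-1) * z) this
        simpa only [XXf'] using this
      · intro e
        rw [e, mul_add]; abel
  have evT : ∀ f, ev (Top f) = t2 * ev f := by
    apply V_induct_X
    · intro f g hf hg; simp only [map_add, hf, hg, mul_add]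
    · intro c f hf; simp only [map_smul, hf, smul_eq_mul]; ring
    · rw [T1, map_smul, smul_eq_mul]
    · intro f
      rw [TX, evX', evX, map_sub, map_smul, smul_eq_mul, mul_inv_cancel_left₀ ht2]
      constructor
      · intro e
        apply mul_left_cancel₀ ht2
        linear_combination e - ev f * hq
      · intro e
        linear_combination t2 * e + ev f * hq
  have YY : ∀ f, Y (Yz (-1) f) = f := fun f => by
    have := hYzadd 1 (-1)
    rw [hYz1] at this
    have := LinearMap.congr_fun this f
    rw [show (1 + -1 : ℤ) = 0 from rfl, hYz0] at this
    exact this.symm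
  have YY' : ∀ f, Yz (-1) (Y f) = f := fun f => by
    have := hYzadd (-1) 1
    rw [hYz1] at this
    have := LinearMap.congr_fun this f
    rw [show (-1 + 1 : ℤ) = 0 from rfl, hYz0] at this
    exact this.symm
  have Yd : ∀ f, Y f = Pi (Top f) := fun f => by rw [hY]; rfl
  have TYi : ∀ f, Top (Yz (-1) f) = Pi f := fun f => by
    have := YY f
    rw [Yd] at this
    rw [← this, PP, this]
  -- pairing
  have pX : ∀ f g, pair (Xm 1 * f) g = pair f (Yz (-1) g) := by
    apply V_induct (P := fun f => ∀ g, pair (Xm 1 * f) g = pair f (Yz (-1) g))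
    · intro f g hf hg k; simp only [mul_add, map_add, LinearMap.add_apply, hf, hg]
    · intro c f hf k; simp only [mul_smul_comm, map_smul, LinearMap.smul_apply, hf]
    · intro m g
      rw [← Xm_add, hpair, hpair, neg_add_rev, hYzadd]; rfl
  have pX' : ∀ f g, pair (Xm (-1) * f) g = pair f (Y g) := fun f g => by
    have := pX (Xm (-1) * f) (Y g)
    rw [XXf, YY'] at this
    exact this.symm
  have p1 : ∀ g, pair 1 g = ev g := fun g => by
    rw [← Xm_zero, hpair, neg_zero, hYz0]; rfl
  have YiT : ∀ g, Yz (-1) (Top g) = Top (Y g) - h • Y g := by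
    intro g
    have e : Top (Yz (-1) (Top g)) = Y g := by rw [TYi, Yd]
    have e2 := TT (Yz (-1) (Top g))
    rw [e] at e2
    rw [e2]; abel
  have pT : ∀ f g, pair (Top f) g = pair f (Top g) := by
    apply V_induct_X (P := fun f => ∀ g, pair (Top f) g = pair f (Top g))
    · intro f g hf hg k; simp only [map_add, LinearMap.add_apply, hf, hg]
    · intro c f hf k; simp only [map_smul, LinearMap.smul_apply, hf]
    · intro g
      rw [T1, map_smul, LinearMap.smul_apply, p1, p1, evT, smul_eq_mul]
    · intro f
      have key : ∀ g, (pair (Top (Xm 1 * f)) g = pair (Xm 1 * f) (Top g)) ↔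
          pair (Top f) (Y g) = pair f (Top (Y g)) := by
        intro g
        rw [TX, pX', pX, YiT, map_sub, map_smul, map_sub, map_smul, LinearMap.sub_apply,
          LinearMap.smul_apply, sub_left_inj]
      constructor
      · intro e g
        have := (key (Yz (-1) g)).1 (e _)
        rwa [YY] at this
      · intro e g
        exact (key g).2 (e _)
  have YXT : ∀ g, q2 • Y (Xm 1 * Top g) = Xm 1 * Top (Yz (-1) g) := by
    intro g
    have e : Top (Xm 1 * Top g) = Xm (-1) * g := by
      rw [TX, TT]; congr 1; abel
    have e2 := PX (Xm (-1) * g)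
    rw [XXf] at e2
    rw [TYi, Yd, e, e2, mul_smul_comm, XXf]
  have pPi : ∀ f g, pair (Pi f) (Xm 1 * Top g) = pair f g := by
    apply V_induct_X (P := fun f => ∀ g, pair (Pi f) (Xm 1 * Top g) = pair f g)
    · intro f g hf hg k; simp only [map_add, LinearMap.add_apply, hf, hg]
    · intro c f hf k; simp only [map_smul, LinearMap.smul_apply, hf]
    · intro g
      have : Pi 1 = 1 := by
        have := hPi 0
        simpa [Xm_zero] using this
      rw [this, p1, p1, evX, evT, inv_mul_cancel_left₀ ht2]
    · intro f
      have key : ∀ g, (pair (Pi (Xm 1 * f)) (Xm 1 * Top g) = pair (Xm 1 * f) g) ↔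
          pair (Pi f) (Xm 1 * Top (Yz (-1) g)) = pair f (Yz (-1) g) := by
        intro g
        rw [PX, map_smul, LinearMap.smul_apply, pX', ← map_smul, YXT, pX]
      constructor
      · intro e g
        have := (key (Y g)).1 (e _)
        rwa [YY'] at this
      · intro e g
        exact (key g).2 (e _)
  have pY : ∀ f g, pair (Y f) (Xm 1 * g) = pair f g := by
    intro f g
    have e : Top (Top g - h • g) = g := by
      rw [map_sub, map_smul, TT]; abel
    have := pPi (Top f) (Top g - h • g)
    rw [e, pT, e] at this
    rw [Yd, this]
  have Y1 : Y 1 = t2 • (1 : V) := by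
    rw [Yd, T1, map_smul]
    have := hPi 0
    simp [Xm_zero] at this
    rw [this]
  have pf1 : ∀ f, pair f 1 = ev f := by
    apply V_induct_X
    · intro f g hf hg; simp only [map_add, LinearMap.add_apply, hf, hg]
    · intro c f hf; simp only [map_smul, LinearMap.smul_apply, hf]
    · exact p1 1
    · intro f
      have e : Yz (-1) 1 = t2⁻¹ • (1 : V) := by
        have := YY' 1
        rw [Y1, map_smul] at this
        rw [← this, smul_smul, inv_mul_cancel₀ ht2, one_smul, this]
      rw [pX, evX, e, map_smul, smul_eq_mul]
      exact mul_right_inj' (inv_ne_zero ht2)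
  intro E _ ⟨c, hc⟩
  constructor
  · intro hE
    have : pair E = 0 := hE
    rw [← pf1, this]; rfl
  · intro hE
    change pair E = 0
    have key : ∀ g, c * pair E (Xm 1 * g) = pair E g := by
      intro g
      rw [← pY E g, hc, map_smul]; rfl
    have hcne : c = 0 → ∀ g, pair E g = 0 := by
      intro h0 g
      rw [← key, h0, zero_mul]
    by_cases h0 : c = 0
    · exact LinearMap.ext (hcne h0)
    · apply LinearMap.ext
      apply V_induct_X
      · intro f g hf hg
        rw [map_add, hf, hg]; simp
      · intro a f hf
        rw [map_smul, hf]; simp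
      · rw [pf1, hE]; rfl
      · intro f
        rw [← key f]
        simp [h0]
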